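/- Fix c ∈ ℂ with c ≠ 0, an integer R ≥ 1 and an integer N ≥ 0, and set M = N+R. Let μ_1,…,μ_N be complex numbers, λ_1,…,λ_M pairwise distinct complex numbers with μ_k ≠ λ_j and λ_m−λ_j±ic ≠ 0 for all indices, and λ_p, λ_s ∈ ℂ with (λ_p−λ_j)²+c² ≠ 0, (λ_s−λ_j)²+c² ≠ 0, Ṽ⁺_j ≠ Ṽ⁻_j for all j, Ṽ⁺_p ≠ Ṽ⁻_p, and Ξ_1 ≠ 0. Then det_M(δ_{jk}+Ũ_{jk}) / (Ṽ⁺_p−Ṽ⁻_p) = det_M(𝓜_{jk}) / Ξ_1, where 𝓜_{j1} = Ξ_j·K(λ_s,λ_j)/(Ṽ⁺_j−Ṽ⁻_j) and, for k ≥ 2, 𝓜_{jk} = δ_{jk} + [i/(Ṽ⁺_j−Ṽ⁻_j)]·Ξ_j·K(λ_j,λ_k). -/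

import Mathlib

open Complex Finset Matrix

namespace LL

noncomputable def Kk (c x y : ℂ) : ℂ := 2 * c / ((x - y) ^ 2 + c ^ 2)

noncomputable def Vp {N M : ℕ} (c : ℂ) (μ : Fin N → ℂ) (lam : Fin M → ℂ) (x : ℂ) : ℂ :=
  (∏ m, (μ m - x + I * c)) / ∏ m, (lam m - x + I * c)

noncomputable def Vm {N M : ℕ} (c : ℂ) (μ : Fin N → ℂ) (lam : Fin M → ℂ) (x : ℂ) : ℂ :=
  (∏ m, (μ m - x - I * c)) / ∏ m, (lam m - x - I * c)

noncomputable def Xi {N M : ℕ} (μ : Fin N → ℂ) (lam : Fin M → ℂ) (j : Fin M) : ℂ :=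
  (∏ m, (μ m - lam j)) / ∏ m ∈ Finset.univ.erase j, (lam m - lam j)

noncomputable def Umat {N M : ℕ} (c : ℂ) (μ : Fin N → ℂ) (lam : Fin M → ℂ) (lp ls : ℂ) :
    Matrix (Fin M) (Fin M) ℂ := fun j k =>
  I / (Vp c μ lam (lam j) - Vm c μ lam (lam j)) * Xi μ lam j *
    (Kk c (lam j) (lam k) - Kk c lp (lam k) * Kk c ls (lam j))

noncomputable def U1mat {N M : ℕ} (c : ℂ) (μ : Fin N → ℂ) (lam : Fin M → ℂ) (lp : ℂ) :
    Matrix (Fin M) (Fin M) ℂ := fun j k =>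
  I / (Vp c μ lam (lam j) - Vm c μ lam (lam j)) * Xi μ lam j *
    (Kk c (lam j) (lam k) - Kk c lp (lam k))

noncomputable def U2mat {N M : ℕ} (c : ℂ) (μ : Fin N → ℂ) (lam : Fin M → ℂ) (lp : ℂ) :
    Matrix (Fin M) (Fin M) ℂ := fun j k =>
  U1mat c μ lam lp j k + I / (Vp c μ lam (lam j) - Vm c μ lam (lam j)) * Kk c lp (lam k)

noncomputable def HR {N M : ℕ} (c sc : ℂ) (R : ℕ) (μ : Fin N → ℂ) (lam : Fin M → ℂ)
    (lp ls : ℂ) : ℂ :=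
  (I * sc) ^ R / (c ^ (2 * R - 1) * ((R - 1).factorial : ℂ)) * (-1 : ℂ) ^ (N * (R - 1)) *
    (∏ j, ∏ k, (lam j - lam k + I * c)) *
    (∏ j, ∏ k, (lam j - μ k)⁻¹) *
    (∏ j, (Vp c μ lam (lam j) - Vm c μ lam (lam j))) *
    (1 + Umat c μ lam lp ls).det /
    ((Vp c μ lam lp - Vm c μ lam lp) * (Vp c μ lam ls - Vm c μ lam ls))

noncomputable def Jcal {N : ℕ} (μ lam : Fin N → ℂ) : ℂ :=
  (∑ j, lam j - ∑ j, μ j) ^ 4 -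
    4 * (∑ j, lam j - ∑ j, μ j) * (∑ j, lam j ^ 3 - ∑ j, μ j ^ 3) +
    3 * (∑ j, lam j ^ 2 - ∑ j, μ j ^ 2) ^ 2

noncomputable def Fff {N : ℕ} (c : ℂ) (μ lam : Fin N → ℂ) (lp ls : ℂ) : ℂ :=
  (-1 : ℂ) ^ N * (Jcal μ lam / (6 * c)) *
    (∏ j, ∏ k, (lam j - lam k + I * c)) *
    (∏ j, ∏ k, (lam j - μ k)⁻¹) *
    (∏ j, (Vp c μ lam (lam j) - Vm c μ lam (lam j))) *
    (1 + Umat c μ lam lp ls).det /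
    ((Vp c μ lam lp - Vm c μ lam lp) * (Vp c μ lam ls - Vm c μ lam ls))

noncomputable def Tcal {N M : ℕ} (μ : Fin N → ℂ) (lam : Fin M → ℂ) : ℂ :=
  (1 / 2 : ℂ) * ((∑ j, lam j - ∑ j, μ j) ^ 2 - (∑ j, lam j ^ 2 - ∑ j, μ j ^ 2))

noncomputable def Gff {N M : ℕ} (c sc : ℂ) (μ : Fin N → ℂ) (lam : Fin M → ℂ) (lp ls : ℂ) : ℂ :=
  -I * (Tcal μ lam / (c * sc)) *
    (∏ j, ∏ k, (lam j - lam k + I * c)) *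
    (∏ j, ∏ k, (lam j - μ k)⁻¹) *
    (∏ j, (Vp c μ lam (lam j) - Vm c μ lam (lam j))) *
    (1 + Umat c μ lam lp ls).det /
    ((Vp c μ lam lp - Vm c μ lam lp) * (Vp c μ lam ls - Vm c μ lam ls))

noncomputable def fsc (c x y : ℂ) : ℂ := (x - y + I * c) / (x - y)

noncomputable def stringRap (cb : ℝ) (M : ℕ) (δ : Fin M → ℂ) (j : Fin M) : ℂ :=
  I * ((cb : ℂ) / 2) * ((M : ℂ) - 1 - 2 * (j.val : ℂ)) + I * δ j

end LL

open LL

/-!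
Write `D x = Vp x - Vm x`. Expanding `Vp x` and `Vm x` in partial fractions over the nodes `lam k`
gives `∑ k, K(x, lam k) * Ξ k = I * D x`. At `x = lam j` this says that `Ξ` is a null vector of the
matrix `A = 1 + kernelMat`, which contains neither auxiliary parameter. Now `1 + Umat` is a rank-one
perturbation `A + w bᵀ` with `w` independent of `λ_p`, so it maps `Ξ` to `(b ⬝ Ξ) w`, and the same
identity at `x = λ_p` evaluates `b ⬝ Ξ` to `D λ_p`. Cramer's rule, together with the fact that
column operations remove `w bᵀ` once `w` itself is a column, gives
`Ξ z * det (1 + Umat) = D λ_p * det (A with column z replaced by w)` for every column `z`.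
-/

namespace LL

section RankOnePerturbation

variable {n R : Type*} [Fintype n] [DecidableEq n] [CommRing R]

theorem det_updateCol_mulVec (A : Matrix n n R) (v : n → R) (z : n) :
    (A.updateCol z (A *ᵥ v)).det = v z * A.det := by
  rw [← cramer_apply, cramer_eq_adjugate_mulVec, mulVec_mulVec, adjugate_mul, smul_mulVec,
    one_mulVec, Pi.smul_apply, smul_eq_mul, mul_comm]

theorem det_updateCol_add_vecMulVec (A : Matrix n n R) (w b : n → R) (z : n) :
    ((A + vecMulVec w b).updateCol z w).det = (A.updateCol z w).det := by
  rw [← det_transpose, ← det_transpose (A.updateCol z w)]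
  refine det_eq_of_forall_row_eq_smul_add_const (Function.update b z 0) z
    (Function.update_self ..) fun k j => ?_
  obtain rfl | hk := eq_or_ne k z
  · simp
  · simp [hk, vecMulVec_apply, mul_comm]

theorem mul_det_add_vecMulVec_of_mulVec_eq_zero {A : Matrix n n R} {v : n → R}
    (hA : A *ᵥ v = 0) (w b : n → R) (z : n) :
    v z * (A + vecMulVec w b).det = (b ⬝ᵥ v) * (A.updateCol z w).det := by
  have hv : (A + vecMulVec w b) *ᵥ v = (b ⬝ᵥ v) • w := by
    rw [add_mulVec, hA, zero_add, vecMulVec_mulVec, op_smul_eq_smul]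
  rw [← det_updateCol_mulVec, hv, det_updateCol_smul, det_updateCol_add_vecMulVec]

end RankOnePerturbation

theorem eval_div_prod_sub_eq_sum {F ι : Type*} [Field F] [DecidableEq ι] {s : Finset ι}
    {v : ι → F} (hv : Set.InjOn v s) {P : Polynomial F} (hP : P.degree < #s) {x : F}
    (hx : ∀ i ∈ s, x ≠ v i) :
    P.eval x / ∏ i ∈ s, (x - v i) =
      ∑ i ∈ s, P.eval (v i) / (∏ j ∈ s.erase i, (v i - v j)) / (x - v i) := by
  have hprod : ∏ i ∈ s, (x - v i) ≠ 0 := prod_ne_zero_iff.mpr fun i hi => sub_ne_zero.mpr (hx i hi)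
  rw [div_eq_iff hprod, mul_comm]
  conv_lhs => rw [Lagrange.eq_interpolate hv hP, Lagrange.eval_interpolate_not_at_node _ hx,
    Lagrange.eval_nodal]
  congr! 2 with i
  rw [Lagrange.nodalWeight, prod_inv_distrib]
  ring

theorem sub_sq_add_sq_eq_mul (c x y : ℂ) :
    (x - y) ^ 2 + c ^ 2 = (y - x + I * c) * (y - x - I * c) := by
  linear_combination c ^ 2 * I_sq

theorem Kk_eq_sub (c x y : ℂ) (h : (x - y) ^ 2 + c ^ 2 ≠ 0) :
    Kk c x y = I * ((y - x + I * c)⁻¹ - (y - x - I * c)⁻¹) := by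
  rw [sub_sq_add_sq_eq_mul, mul_ne_zero_iff] at h
  rw [Kk, sub_sq_add_sq_eq_mul, inv_sub_inv h.1 h.2, ← mul_div_assoc]
  congr 1
  linear_combination 2 * c * I_sq

section

variable {N M : ℕ} {c : ℂ} {μ : Fin N → ℂ} {lam : Fin M → ℂ}

theorem prod_sub_div_prod_sub_eq_sum_Xi (hNM : N < M) (μ : Fin N → ℂ)
    (hinj : Function.Injective lam) {x : ℂ} (hx : ∀ m, lam m - x ≠ 0) :
    (∏ m, (μ m - x)) / ∏ m, (lam m - x) = ∑ k, Xi μ lam k / (lam k - x) := by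
  have hdeg : (∏ m, (Polynomial.X + Polynomial.C (μ m))).degree <
      (#(univ : Finset (Fin M)) : WithBot ℕ) := by
    simpa [Polynomial.degree_prod] using hNM
  -- Reflecting the nodes and the argument turns every `X - node` into the paper's `lam - x`.
  simpa [Polynomial.eval_prod, neg_add_eq_sub, Xi] using
    eval_div_prod_sub_eq_sum (neg_injective.comp hinj).injOn hdeg (x := -x)
      fun m _ h => hx m (sub_eq_zero.mpr (neg_injective h).symm)

theorem sum_Kk_mul_Xi (hNM : N < M) (μ : Fin N → ℂ) (hinj : Function.Injective lam) {x : ℂ}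
    (hx : ∀ m, (x - lam m) ^ 2 + c ^ 2 ≠ 0) :
    ∑ k, Kk c x (lam k) * Xi μ lam k = I * (Vp c μ lam x - Vm c μ lam x) := by
  have hfactors (m) : lam m - x + I * c ≠ 0 ∧ lam m - x - I * c ≠ 0 :=
    mul_ne_zero_iff.mp (sub_sq_add_sq_eq_mul c x (lam m) ▸ hx m)
  have hVp : Vp c μ lam x = ∑ k, Xi μ lam k / (lam k - x + I * c) := by
    simpa only [Vp, ← sub_add] using prod_sub_div_prod_sub_eq_sum_Xi hNM μ hinj (x := x - I * c)
      fun m => by simpa only [← sub_add] using (hfactors m).1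
  have hVm : Vm c μ lam x = ∑ k, Xi μ lam k / (lam k - x - I * c) := by
    simpa only [Vm, ← sub_sub] using prod_sub_div_prod_sub_eq_sum_Xi hNM μ hinj (x := x + I * c)
      fun m => by simpa only [← sub_sub] using (hfactors m).2
  rw [hVp, hVm, ← sum_sub_distrib, mul_sum]
  refine sum_congr rfl fun k _ => ?_
  rw [Kk_eq_sub c x (lam k) (hx k)]
  ring

/-- The part `[i/(Ṽ⁺_j−Ṽ⁻_j)]·Ξ_j·K(λ_j,λ_k)` of `Ũ_{jk}` that contains neither `λ_p` nor `λ_s`. -/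
noncomputable def kernelMat (c : ℂ) (μ : Fin N → ℂ) (lam : Fin M → ℂ) :
    Matrix (Fin M) (Fin M) ℂ := fun j k =>
  I / (Vp c μ lam (lam j) - Vm c μ lam (lam j)) * Xi μ lam j * Kk c (lam j) (lam k)

/-- The column `Ξ_j·K(λ_s,λ_j)/(Ṽ⁺_j−Ṽ⁻_j)` that takes the place of one column of
`1 + kernelMat` in the matrix `𝓜`; it also spans the range of the rank-one part of `Ũ`. -/
noncomputable def auxCol (c : ℂ) (μ : Fin N → ℂ) (lam : Fin M → ℂ) (ls : ℂ) : Fin M → ℂ := fun j =>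
  Xi μ lam j * Kk c ls (lam j) / (Vp c μ lam (lam j) - Vm c μ lam (lam j))

theorem Umat_eq_kernelMat_add_vecMulVec (c : ℂ) (μ : Fin N → ℂ) (lam : Fin M → ℂ) (lp ls : ℂ) :
    Umat c μ lam lp ls =
      kernelMat c μ lam + vecMulVec (auxCol c μ lam ls) (fun k => -I * Kk c lp (lam k)) := by
  ext j k
  simp only [Umat, kernelMat, auxCol, Matrix.add_apply, vecMulVec_apply]
  ring

theorem one_add_kernelMat_mulVec_Xi (hNM : N < M) (hinj : Function.Injective lam)
    (hlam : ∀ j k, (lam j - lam k) ^ 2 + c ^ 2 ≠ 0)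
    (hV : ∀ j, Vp c μ lam (lam j) ≠ Vm c μ lam (lam j)) :
    (1 + kernelMat c μ lam) *ᵥ Xi μ lam = 0 := by
  ext j
  have hD : Vp c μ lam (lam j) - Vm c μ lam (lam j) ≠ 0 := sub_ne_zero.mpr (hV j)
  have hkernel : (kernelMat c μ lam *ᵥ Xi μ lam) j = -Xi μ lam j := by
    simp only [mulVec, dotProduct, kernelMat, mul_assoc, ← mul_sum]
    rw [sum_Kk_mul_Xi hNM μ hinj (hlam j)]
    field_simp
    rw [I_sq, neg_one_mul]
  rw [add_mulVec, one_mulVec, Pi.add_apply, hkernel, add_neg_cancel, Pi.zero_apply]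

theorem Xi_mul_det_one_add_Umat (hNM : N < M) (hinj : Function.Injective lam)
    (hlam : ∀ j k, (lam j - lam k) ^ 2 + c ^ 2 ≠ 0)
    (hV : ∀ j, Vp c μ lam (lam j) ≠ Vm c μ lam (lam j))
    {lp : ℂ} (hp : ∀ j, (lp - lam j) ^ 2 + c ^ 2 ≠ 0) (ls : ℂ) (z : Fin M) :
    Xi μ lam z * (1 + Umat c μ lam lp ls).det =
      (Vp c μ lam lp - Vm c μ lam lp) *
        ((1 + kernelMat c μ lam).updateCol z (auxCol c μ lam ls)).det := by
  have hpair : (fun k => -I * Kk c lp (lam k)) ⬝ᵥ Xi μ lam = Vp c μ lam lp - Vm c μ lam lp := by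
    simp only [dotProduct, mul_assoc, ← mul_sum]
    rw [sum_Kk_mul_Xi hNM μ hinj hp, ← mul_assoc, neg_mul, I_mul_I, neg_neg, one_mul]
  rw [Umat_eq_kernelMat_add_vecMulVec, ← add_assoc, mul_det_add_vecMulVec_of_mulVec_eq_zero
    (one_add_kernelMat_mulVec_Xi hNM hinj hlam hV), hpair]

end

end LL

/-- Cancellation of the auxiliary parameter `λ_p` from the determinant formula for
the form factor of `Ψ^R(0)`:
`det_M(δ+Ũ)/(Ṽ⁺_p−Ṽ⁻_p) = det_M(𝓜)/Ξ₁`, where the first column of `𝓜` is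
`Ξ_j·K(λ_s,λ_j)/(Ṽ⁺_j−Ṽ⁻_j)` and, for `k ≥ 2`, `𝓜_{jk} = δ_{jk} + (i/(Ṽ⁺_j−Ṽ⁻_j))·Ξ_j·K(λ_j,λ_k)`. -/
theorem det_aux_param_cancellation {N R : ℕ} (c : ℂ) (hc : c ≠ 0) (hR : 1 ≤ R)
    (μ : Fin N → ℂ) (lam : Fin (N + R) → ℂ) (hinj : Function.Injective lam)
    (hmulam : ∀ k j, μ k ≠ lam j)
    (hpm : ∀ m j, lam m - lam j + I * c ≠ 0 ∧ lam m - lam j - I * c ≠ 0)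
    (lp ls : ℂ)
    (hp1 : ∀ j, (lp - lam j) ^ 2 + c ^ 2 ≠ 0)
    (hs1 : ∀ j, (ls - lam j) ^ 2 + c ^ 2 ≠ 0)
    (hV : ∀ j, Vp c μ lam (lam j) ≠ Vm c μ lam (lam j))
    (hVp : Vp c μ lam lp ≠ Vm c μ lam lp)
    (hXi1 : Xi μ lam (⟨0, by omega⟩ : Fin (N + R)) ≠ 0) :
    (1 + Umat c μ lam lp ls).det / (Vp c μ lam lp - Vm c μ lam lp) =
      (Matrix.of fun j k : Fin (N + R) =>
          if k = (⟨0, by omega⟩ : Fin (N + R)) then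
            Xi μ lam j * Kk c ls (lam j) /
              (Vp c μ lam (lam j) - Vm c μ lam (lam j))
          else
            (if j = k then (1 : ℂ) else 0) +
              I / (Vp c μ lam (lam j) - Vm c μ lam (lam j)) * Xi μ lam j *
                Kk c (lam j) (lam k)).det /
        Xi μ lam (⟨0, by omega⟩ : Fin (N + R)) := by
  have hlam (j k) : (lam j - lam k) ^ 2 + c ^ 2 ≠ 0 := by
    rw [sub_sq_add_sq_eq_mul]
    exact mul_ne_zero (hpm k j).1 (hpm k j).2
  rw [div_eq_div_iff (sub_ne_zero.mpr hVp) hXi1, mul_comm,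
    Xi_mul_det_one_add_Umat (by omega) hinj hlam hV hp1, mul_comm]
  congr 2
  ext j k
  simp only [updateCol_apply, Matrix.add_apply, one_apply, of_apply, kernelMat, auxCol]
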